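/- Let q = 2^m where m is a positive even integer, let U_{q+1} = {x ∈ F_{q^2} : x^{q+1} = 1}, and let f : F_{q^2} → F_{q^2} be defined by f(x) = x^2 + x·(x^q)^{-1} + x^2·(x^q)^{-1} (with the convention 0^{-1} = 0). Then the set of x ∈ F_{q^2} with f(x) = 1 is exactly {1} ∪ {u + 1 : u ∈ U_{q+1}, u ≠ 1}. -/

import Mathlib

/-! The Frobenius power `x ↦ x ^ q` enters only as a ring endomorphism `σ`. For `x ≠ 0`, clearing
the denominator `y = σ x` from the equation gives `(x + 1) * ((x + 1) * (y + 1) - 1) = 0` in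
characteristic two. As `y + 1 = σ (x + 1)`, the second factor vanishes exactly when `u = x + 1`
satisfies `u * σ u = 1`, and `x ≠ 0` means `u ≠ 1`. -/

theorem sq_add_mul_inv_add_sq_mul_inv_eq_one_iff {K : Type*} [Field K] [CharP K 2] {x y : K}
    (hy : y ≠ 0) :
    x ^ 2 + x * y⁻¹ + x ^ 2 * y⁻¹ = 1 ↔ x = 1 ∨ (x + 1) * (y + 1) = 1 := by
  have two_eq_zero : (2 : K) = 0 := CharTwo.two_eq_zero
  have factorization : x ^ 2 + x * y⁻¹ + x ^ 2 * y⁻¹ - 1 =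
      (x + 1) * ((x + 1) * (y + 1) - 1) * y⁻¹ := by
    field_simp
    linear_combination -(y + x * y) * two_eq_zero
  rw [← sub_eq_zero, factorization, mul_eq_zero_iff_right (inv_ne_zero hy), mul_eq_zero,
    CharTwo.add_eq_zero, sub_eq_zero]

theorem exists_mul_map_eq_one_and_eq_add_one_iff {R : Type*} [Ring R] [CharP R 2] (σ : R →+* R)
    {x : R} :
    (∃ u : R, u * σ u = 1 ∧ u ≠ 1 ∧ x = u + 1) ↔ x ≠ 0 ∧ (x + 1) * (σ x + 1) = 1 := by
  have exists_iff : (∃ u : R, u * σ u = 1 ∧ u ≠ 1 ∧ x = u + 1) ↔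
      (x + 1) * σ (x + 1) = 1 ∧ x + 1 ≠ 1 := by
    simp only [CharTwo.eq_add_iff_add_eq, exists_eq_right_right']
  rw [exists_iff, map_add, map_one, ne_eq, add_eq_right, and_comm]

theorem stmt_3_general {K : Type*} [Field K] [CharP K 2] (σ : K →+* K) :
    {x : K | x ^ 2 + x * (σ x)⁻¹ + x ^ 2 * (σ x)⁻¹ = 1} =
      {1} ∪ {x : K | ∃ u : K, u * σ u = 1 ∧ u ≠ 1 ∧ x = u + 1} := by
  ext x
  simp only [Set.mem_ofPred_eq, Set.mem_union, Set.mem_singleton_iff,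
    exists_mul_map_eq_one_and_eq_add_one_iff]
  rcases eq_or_ne x 0 with rfl | hx
  · simp
  · simp only [sq_add_mul_inv_add_sq_mul_inv_eq_one_iff ((map_ne_zero σ).mpr hx), ne_eq, hx,
      not_false_eq_true, true_and]

/-- The solution set of f(x) = 1 with f(x) = x^2 + x^{1-q} + x^{2-q}
is exactly {1} ∪ {u + 1 : u ∈ U_{q+1}, u ≠ 1}. -/
theorem stmt_3 (m : ℕ) (hm : 0 < m) (hme : Even m) (q : ℕ) (hq : q = 2 ^ m)
    (K : Type*) [Field K] [Fintype K] [CharP K 2] (hK : Fintype.card K = q ^ 2) :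
    {x : K | x ^ 2 + x * (x ^ q)⁻¹ + x ^ 2 * (x ^ q)⁻¹ = 1} =
      ({1} : Set K) ∪ {x : K | ∃ u : K, u ^ (q + 1) = 1 ∧ u ≠ 1 ∧ x = u + 1} := by
  simpa only [iterateFrobenius_def, ← hq, ← pow_succ'] using
    stmt_3_general (iterateFrobenius K 2 m)
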